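/- Let L be an algebraically closed field and let K be a field extension of L that is finitely generated over L and of transcendence degree 1 over L (i.e. K is the function field of a curve over L). Then every central simple K-algebra D of finite dimension d^2 over K is isomorphic as a K-algebra to the matrix algebra of d-by-d matrices over K. -/

import Mathlib

/-!
A field is quasi-algebraically closed, or `C₁`, if every form of degree `n > 0` in more than `n`
variables has a nontrivial zero.

*Function fields of curves are `C₁` (Tsen).* For a form `f` of degree `n` in `N > n` variables over
`k[t]` whose coefficients have degree at most `c`, look for a zero whose entries are polynomials of
degree at most `c`. Their `N (c + 1)` coefficients are subject to `c + n c + 1` homogeneous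
equations over `k`, which is fewer, so by Krull's height theorem the origin is not an isolated
solution. The property passes to a finite extension `K / F` by composing the norm form of `K / F`
with the coordinates of a form over `K`: the result has degree `n [K : F]` in `N [K : F]` variables.

*Central division algebras over a `C₁` field are trivial.* Such an algebra `D` has dimension `n ^ 2`
over `K`, where the separable closure `E` of `K` gives `E ⊗ D ≃ Mₙ(E)`. The determinant of `1 ⊗ a`
is invariant under the Galois group by the Skolem–Noether theorem, so the reduced norm is a form of
degree `n` in `n ^ 2` variables over `K`. It has no nontrivial zero, because nonzero elements of `D`
are invertible; hence `n = 1`.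
-/

open scoped TensorProduct

section Forms

open MvPolynomial

variable {R A σ τ : Type*} [CommRing R] [CommRing A] [Algebra R A] {n : ℕ}

theorem eval_zero_of_isHomogeneous {f : MvPolynomial σ R} (hf : f.IsHomogeneous n)
    (hn : n ≠ 0) : eval 0 f = 0 := by
  rw [eval_zero, constantCoeff_eq]
  exact hf.coeff_eq_zero (by simpa using hn.symm)

theorem exists_isHomogeneous_eval_eq_map (φ : A →ₗ[R] R) {f : MvPolynomial σ A}
    (hf : f.IsHomogeneous n) :
    ∃ g : MvPolynomial σ R, g.IsHomogeneous n ∧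
      ∀ y : σ → R, eval y g = φ (eval (fun s ↦ algebraMap R A (y s)) f) := by
  refine ⟨∑ m ∈ f.support, monomial m (φ (f.coeff m)),
    .sum _ _ _ fun m hm ↦ isHomogeneous_monomial _ ?_, fun y ↦ ?_⟩
  · rw [← hf (mem_support_iff.mp hm), Finsupp.degree_eq_weight_one]
    rfl
  · have hterm (m : σ →₀ ℕ) :
        f.coeff m * (m.prod fun s k ↦ algebraMap R A (y s) ^ k) =
          (m.prod fun s k ↦ y s ^ k) • f.coeff m := by
      simp only [Finsupp.prod, Algebra.smul_def, map_prod, map_pow, mul_comm]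
    simp only [eval_eq _ f, map_sum, eval_monomial]
    refine Finset.sum_congr rfl fun m _ ↦ ?_
    rw [← Finsupp.prod, hterm, map_smul, smul_eq_mul, mul_comm]

theorem eval_bind₁ (x : τ → R) (g : σ → MvPolynomial τ R) (f : MvPolynomial σ R) :
    eval x (bind₁ g f) = eval (fun s ↦ eval x (g s)) f :=
  eval₂Hom_bind₁ (RingHom.id R) x g f

theorem isHomogeneous_sum_C_mul_X {σ : Type*} [Fintype τ] (v : τ → R) (i : τ → σ) :
    (∑ t, C (v t) * X (i t) : MvPolynomial σ R).IsHomogeneous 1 :=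
  .sum _ _ _ fun _ _ ↦ isHomogeneous_C_mul_X _ _

theorem exists_isHomogeneous_eval_eq_map_eval_sum [Fintype τ] (φ : A →ₗ[R] R) (v : τ → A)
    {f : MvPolynomial σ A} (hf : f.IsHomogeneous n) :
    ∃ g : MvPolynomial (σ × τ) R, g.IsHomogeneous n ∧
      ∀ y : σ × τ → R, eval y g = φ (eval (fun s ↦ ∑ t, y (s, t) • v t) f) := by
  obtain ⟨g, hg, hgy⟩ := exists_isHomogeneous_eval_eq_map φ <| hf.aeval
    (fun s ↦ ∑ t, C (v t) * X (s, t)) fun s ↦ isHomogeneous_sum_C_mul_X v (s, ·)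
  refine ⟨g, by rwa [one_mul] at hg, fun y ↦ ?_⟩
  have hval (s : σ) : eval (fun p ↦ algebraMap R A (y p)) (∑ t, C (v t) * X (s, t)) =
      ∑ t, y (s, t) • v t := by
    simp only [map_sum, map_mul, eval_C, eval_X, Algebra.smul_def, mul_comm]
  simp only [hgy, aeval_eq_bind₁, eval_bind₁, hval]

theorem exists_isHomogeneous_eval_eq_det [Fintype τ] {m : Type*} [Fintype m] [DecidableEq m]
    (M : τ → Matrix m m R) :
    ∃ g : MvPolynomial τ R, g.IsHomogeneous (Fintype.card m) ∧
      ∀ y : τ → R, eval y g = (∑ t, y t • M t).det := by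
  let P : Matrix m m (MvPolynomial τ R) := .of fun i j ↦ ∑ t, C (M t i j) * X t
  refine ⟨P.det, ?_, fun y ↦ ?_⟩
  · rw [Matrix.det_apply]
    refine .sum _ _ _ fun π _ ↦ ?_
    have h := IsHomogeneous.prod Finset.univ (fun i ↦ P (π i) i) (fun _ ↦ 1)
      fun i _ ↦ isHomogeneous_sum_C_mul_X _ _
    rw [Finset.sum_const, Finset.card_univ, smul_eq_mul, mul_one] at h
    exact (homogeneousSubmodule τ R _).smul_of_tower_mem _ h
  · rw [RingHom.map_det]
    congr 1
    ext i j
    simp [P, Matrix.sum_apply, mul_comm]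

theorem exists_isHomogeneous_eval_eq_norm [Fintype τ] (b : Module.Basis τ R A) :
    ∃ g : MvPolynomial τ R, g.IsHomogeneous (Fintype.card τ) ∧
      ∀ y : τ → R, eval y g = Algebra.norm R (∑ t, y t • b t) := by
  classical
  obtain ⟨g, hg, hgy⟩ := exists_isHomogeneous_eval_eq_det fun t ↦ Algebra.leftMulMatrix b (b t)
  refine ⟨g, hg, fun y ↦ ?_⟩
  simp only [hgy, Algebra.norm_eq_matrix_det b, map_sum, map_smul]

end Forms

section Nullstellensatz

open MvPolynomial

variable {k σ : Type*} [Field k]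

theorem height_vanishingIdeal_singleton_eq (x y : σ → k) :
    (vanishingIdeal k {x} : Ideal (MvPolynomial σ k)).height =
      (vanishingIdeal k {y} : Ideal (MvPolynomial σ k)).height := by
  let e : MvPolynomial σ k ≃ₐ[k] MvPolynomial σ k :=
    AlgEquiv.ofAlgHom (aeval fun i ↦ X i + C (x i - y i)) (aeval fun i ↦ X i - C (x i - y i))
      (by ext i; simp) (by ext i; simp)
  have he (p : MvPolynomial σ k) : aeval y (e p) = aeval x p := by
    have : (aeval y).comp e.toAlgHom = aeval x := by ext i; simp [e]
    exact DFunLike.congr_fun this p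
  have hcomap : (vanishingIdeal k {x} : Ideal (MvPolynomial σ k)) =
      (vanishingIdeal k {y}).comap e.toRingEquiv := by
    ext p
    rw [Ideal.mem_comap, mem_vanishingIdeal_singleton_iff, ← he]
    exact (mem_vanishingIdeal_singleton_iff y _).symm
  rw [hcomap, RingEquiv.height_comap]

theorem height_vanishingIdeal_singleton [IsAlgClosed k] [Finite σ] (x : σ → k) :
    (vanishingIdeal k {x} : Ideal (MvPolynomial σ k)).height = Nat.card σ := by
  have hdim : ringKrullDim (MvPolynomial σ k) = (Nat.card σ : ℕ∞) := by
    rw [ringKrullDim_of_isNoetherianRing, ringKrullDim_eq_zero_of_field, zero_add]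
    rfl
  have : FiniteRingKrullDim (MvPolynomial σ k) := by
    rw [finiteRingKrullDim_iff_ne_bot_and_top, hdim]
    exact ⟨WithBot.coe_ne_bot, WithBot.coe_injective.ne (ENat.natCast_ne_top _)⟩
  obtain ⟨M, hM, hMdim⟩ := Ideal.exists_isMaximal_height (R := MvPolynomial σ k)
  obtain ⟨y, rfl⟩ := isMaximal_iff_eq_vanishingIdeal_singleton.mp hM
  rw [height_vanishingIdeal_singleton_eq x y]
  exact_mod_cast hMdim.trans hdim

theorem exists_ne_forall_eval_eq_zero [IsAlgClosed k] [Finite σ] {ι : Type*} [Finite ι]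
    (f : ι → MvPolynomial σ k) (hcard : Nat.card ι < Nat.card σ) {x₀ : σ → k}
    (hx₀ : ∀ j, eval x₀ (f j) = 0) : ∃ x ≠ x₀, ∀ j, eval x (f j) = 0 := by
  by_contra! h
  have hlocus : zeroLocus k (Ideal.span (Set.range f)) = {x₀} := by
    ext x
    simp only [zeroLocus_span, Set.forall_mem_range]
    refine ⟨fun hx ↦ ?_, ?_⟩
    · by_contra hne
      obtain ⟨j, hj⟩ := h x hne
      exact hj (hx j)
    · rintro rfl
      exact hx₀
  have hmin : vanishingIdeal k {x₀} ∈ (Ideal.span (Set.range f)).minimalPrimes := by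
    rw [← Ideal.radical_minimalPrimes, ← vanishingIdeal_zeroLocus_eq_radical (K := k), hlocus,
      Ideal.minimalPrimes_eq_subsingleton_self]
    rfl
  have hle := Ideal.height_le_card_of_mem_minimalPrimes_span (Set.finite_range f) hmin
  rw [height_vanishingIdeal_singleton] at hle
  have hrange : (Set.range f).ncard ≤ Nat.card ι :=
    Nat.card_le_card_of_surjective _ Set.rangeFactorization_surjective
  exact hcard.not_ge ((ENat.natCast_le_natCast.mp hle).trans hrange)

end Nullstellensatz

open MvPolynomial in
/-- Quasi-algebraically closed (`C₁`) fields: every form of degree `n > 0` in more than `n`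
variables has a nontrivial zero. This is the property of function fields of curves from which the
splitting of central simple algebras is deduced. The variables are indexed by a finite type in
`Type`, which loses no generality and keeps the class free of an extra universe. -/
class IsQuasiAlgClosed (F : Type*) [Field F] : Prop where
  exists_ne_zero_eval_eq_zero : ∀ {σ : Type} [Fintype σ] {n : ℕ} {f : MvPolynomial σ F},
    f.IsHomogeneous n → n ≠ 0 → n < Fintype.card σ → ∃ x ≠ 0, eval x f = 0

namespace IsQuasiAlgClosed

open MvPolynomial

instance of_isAlgClosed (k : Type*) [Field k] [IsAlgClosed k] : IsQuasiAlgClosed k where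
  exists_ne_zero_eval_eq_zero {σ _ n f} hf hn hcard := by
    obtain ⟨x, hx, hfx⟩ := exists_ne_forall_eval_eq_zero (fun _ : Unit ↦ f)
      (by simpa using (Nat.one_le_iff_ne_zero.mpr hn).trans_lt hcard)
      fun _ ↦ eval_zero_of_isHomogeneous hf hn
    exact ⟨x, hx, hfx ()⟩

section Extension

variable (F K : Type*) [Field F] [IsQuasiAlgClosed F] [Field K] [Algebra F K]

theorem of_finiteDimensional [FiniteDimensional F K] : IsQuasiAlgClosed K where
  exists_ne_zero_eval_eq_zero {σ _ n f} hf hn hcard := by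
    let b := Module.finBasis F K
    choose g hg hgy using fun j ↦ exists_isHomogeneous_eval_eq_map_eval_sum (b.coord j) b hf
    obtain ⟨N, hN, hNy⟩ := exists_isHomogeneous_eval_eq_norm b
    have hpos : 0 < Module.finrank F K := Module.finrank_pos
    have hlt : n * Module.finrank F K < Fintype.card (σ × Fin (Module.finrank F K)) := by
      rw [Fintype.card_prod, Fintype.card_fin]
      exact Nat.mul_lt_mul_of_pos_right hcard hpos
    obtain ⟨y, hy, hNgy⟩ := exists_ne_zero_eval_eq_zero (f := bind₁ g N)
      (by simpa only [aeval_eq_bind₁, Fintype.card_fin] using hN.aeval g hg)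
      (Nat.mul_ne_zero hn hpos.ne') hlt
    refine ⟨fun s ↦ ∑ i, y (s, i) • b i, fun h ↦ hy ?_, ?_⟩
    · ext ⟨s, i⟩
      exact Fintype.linearIndependent_iff.mp b.linearIndependent _ (congrFun h s) i
    · rw [eval_bind₁, hNy] at hNgy
      simp only [hgy, Module.Basis.coord_apply, b.sum_repr] at hNgy
      exact Algebra.norm_eq_zero_iff.mp hNgy

theorem of_isAlgebraic [Algebra.IsAlgebraic F K] : IsQuasiAlgClosed K where
  exists_ne_zero_eval_eq_zero {σ _ n f} hf hn hcard := by
    let E := IntermediateField.adjoin F (f.coeffs : Set K)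
    have : FiniteDimensional F E := IntermediateField.finiteDimensional_adjoin fun a _ ↦
      Algebra.IsIntegral.isIntegral a
    have := of_finiteDimensional F E
    obtain ⟨g, hg⟩ : f ∈ Set.range (map (algebraMap E K)) := by
      rw [mem_range_map_iff_coeffs_subset]
      exact fun a ha ↦ ⟨⟨a, IntermediateField.subset_adjoin _ _ ha⟩, rfl⟩
    have hinj : Function.Injective (algebraMap E K) := (algebraMap E K).injective
    obtain ⟨x, hx, hgx⟩ := exists_ne_zero_eval_eq_zero (.of_map hinj (hg ▸ hf)) hn hcard
    refine ⟨algebraMap E K ∘ x, fun h ↦ hx ?_, ?_⟩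
    · ext s : 1
      exact hinj ((congrFun h s).trans (map_zero _).symm)
    · rw [← hg, eval_map, ← eval₂_comp, hgx, map_zero]

end Extension

theorem of_ringEquiv {F K : Type*} [Field F] [IsQuasiAlgClosed F] [Field K] (e : F ≃+* K) :
    IsQuasiAlgClosed K :=
  letI := e.toRingHom.toAlgebra
  haveI : FiniteDimensional F K := .of_surjective (Algebra.linearMap F K) e.surjective
  of_finiteDimensional F K

end IsQuasiAlgClosed

section Tsen

open MvPolynomial in
theorem exists_map_eq_C_mul {A F σ : Type*} [CommRing A] [Field F] [Algebra A F]
    [IsFractionRing A F] (f : MvPolynomial σ F) :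
    ∃ a ≠ (0 : F), ∃ g : MvPolynomial σ A, map (algebraMap A F) g = C a * f := by
  obtain ⟨a, ha⟩ := IsLocalization.exist_integer_multiples (nonZeroDivisors A) f.support f.coeff
  refine ⟨algebraMap A F a, (IsLocalization.map_units F a).ne_zero, ?_⟩
  change C (algebraMap A F a) * f ∈ Set.range (map (algebraMap A F))
  rw [mem_range_map_iff_coeffs_subset]
  intro c hc
  obtain ⟨m, hm, rfl⟩ := mem_coeffs_iff.mp hc
  rw [coeff_C_mul, ← Algebra.smul_def]
  refine ha m (mem_support_iff.mpr fun hm₀ ↦ mem_support_iff.mp hm ?_)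
  rw [coeff_C_mul, hm₀, mul_zero]

section Polynomial

open Polynomial

theorem exists_forall_natDegree_coeff_le {R σ : Type*} [CommRing R] (f : MvPolynomial σ R[X]) :
    ∃ c, ∀ m, (f.coeff m).natDegree ≤ c := by
  refine ⟨f.support.sup fun m ↦ (f.coeff m).natDegree, fun m ↦ ?_⟩
  by_cases hm : m ∈ f.support
  · exact Finset.le_sup (f := fun m ↦ (f.coeff m).natDegree) hm
  · simp [MvPolynomial.notMem_support_iff.mp hm]

theorem natDegree_eval_le {R σ : Type*} [CommRing R] {n c t : ℕ} {f : MvPolynomial σ R[X]}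
    (hf : f.IsHomogeneous n) (hc : ∀ m, (f.coeff m).natDegree ≤ c) {x : σ → R[X]}
    (hx : ∀ s, (x s).natDegree ≤ t) : (MvPolynomial.eval x f).natDegree ≤ c + n * t := by
  rw [MvPolynomial.eval_eq]
  refine natDegree_sum_le_of_forall_le _ _ fun m hm ↦ natDegree_mul_le_of_le (hc m) ?_
  calc (∏ i ∈ m.support, x i ^ m i).natDegree
      ≤ ∑ i ∈ m.support, (x i ^ m i).natDegree := natDegree_prod_le _ _
    _ ≤ ∑ i ∈ m.support, m i * t :=
      Finset.sum_le_sum fun i _ ↦ natDegree_pow_le_of_le _ (hx i)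
    _ = n * t := by
      rw [← Finset.sum_mul, ← hf (MvPolynomial.mem_support_iff.mp hm),
        ← Finsupp.degree_apply, Finsupp.degree_eq_weight_one]
      rfl

theorem exists_ne_zero_eval_polynomial_eq_zero {k σ : Type*} [Field k] [IsAlgClosed k]
    [Fintype σ] {n : ℕ} {f : MvPolynomial σ k[X]} (hf : f.IsHomogeneous n) (hn : n ≠ 0)
    (hcard : n < Fintype.card σ) : ∃ x ≠ 0, MvPolynomial.eval x f = 0 := by
  classical
  obtain ⟨c, hc⟩ := exists_forall_natDegree_coeff_le f
  let v (i : Fin (c + 1)) : k[X] := monomial i 1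
  choose g hg hgy using fun j ↦ exists_isHomogeneous_eval_eq_map_eval_sum (lcoeff k j) v hf
  have hlt : c + n * c + 1 < Fintype.card σ * (c + 1) := by
    nlinarith [Nat.mul_le_mul_right (c + 1) (Nat.succ_le_of_lt hcard), Nat.pos_of_ne_zero hn]
  obtain ⟨y, hy, hgy₀⟩ := exists_ne_forall_eval_eq_zero
    (fun j : Fin (c + n * c + 1) ↦ g j) (by simpa using hlt)
    fun j ↦ eval_zero_of_isHomogeneous (hg j) hn
  let x (s : σ) : k[X] := ofFn (c + 1) fun i ↦ y (s, i)
  have hx (s : σ) : x s = ∑ i, y (s, i) • v i := by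
    simp only [x, v, ofFn_eq_sum_monomial, smul_monomial, smul_eq_mul, mul_one]
  have hxdeg (s : σ) : (x s).natDegree ≤ c :=
    Nat.le_of_lt_succ (ofFn_natDegree_lt c.succ_pos _)
  refine ⟨x, fun h ↦ hy ?_, ?_⟩
  · ext ⟨s, i⟩
    exact congrFun (injective_ofFn (c + 1) ((congrFun h s).trans (map_zero _).symm)) i
  · ext j
    rw [coeff_zero]
    rcases lt_or_ge j (c + n * c + 1) with hj | hj
    · rw [← hgy₀ ⟨j, hj⟩, hgy, ← funext hx, lcoeff_apply]
    · exact coeff_eq_zero_of_natDegree_lt <|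
        (natDegree_eval_le hf hc hxdeg).trans_lt (Nat.lt_of_succ_le hj)

end Polynomial

open MvPolynomial in
theorem IsQuasiAlgClosed.of_isFractionRing_polynomial (k F : Type*) [Field k] [IsAlgClosed k]
    [Field F] [Algebra (Polynomial k) F] [IsFractionRing (Polynomial k) F] :
    IsQuasiAlgClosed F where
  exists_ne_zero_eval_eq_zero {σ _ n f} hf hn hcard := by
    have hinj := IsFractionRing.injective (Polynomial k) F
    obtain ⟨a, ha, g, hg⟩ := exists_map_eq_C_mul (A := Polynomial k) f
    have hghom : g.IsHomogeneous n := .of_map hinj <| hg ▸ hf.C_mul a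
    obtain ⟨x, hx, hgx⟩ := exists_ne_zero_eval_polynomial_eq_zero hghom hn hcard
    refine ⟨algebraMap (Polynomial k) F ∘ x, fun h ↦ hx ?_, ?_⟩
    · ext1 s
      exact hinj ((congrFun h s).trans (map_zero _).symm)
    · have : eval (algebraMap (Polynomial k) F ∘ x) (C a * f) = 0 := by
        rw [← hg, eval_map, ← eval₂_comp, hgx, map_zero]
      rw [map_mul, eval_C] at this
      exact (mul_eq_zero.mp this).resolve_left ha

theorem IsQuasiAlgClosed.of_trdeg_le_one (k K : Type*) [Field k] [IsAlgClosed k] [Field K]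
    [Algebra k K] (h : Algebra.trdeg k K ≤ 1) : IsQuasiAlgClosed K := by
  obtain ⟨s, hs⟩ := exists_isTranscendenceBasis k K
  rw [← hs.cardinalMk_eq_trdeg, Cardinal.mk_le_one_iff_set_subsingleton] at h
  have halg := hs.isAlgebraic_field
  rw [Subtype.range_coe] at halg
  obtain rfl | ⟨x, rfl⟩ := h.eq_empty_or_singleton
  · have : Algebra.IsAlgebraic k K := hs.isEmpty_iff_isAlgebraic.mp inferInstance
    exact of_isAlgebraic k K
  · have hx : Transcendental k x := hs.1.transcendental ⟨x, rfl⟩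
    have := of_isFractionRing_polynomial k (RatFunc k)
    have := of_ringEquiv (RatFunc.algEquivOfTranscendental x hx).toRingEquiv
    exact of_isAlgebraic (IntermediateField.adjoin k {x}) K

end Tsen

section TensorProduct

open Algebra.TensorProduct

section Centralizer

variable {K A D : Type*} [CommRing K] [Ring D] [Algebra K D] [Algebra.IsCentral K D]

theorem mem_range_includeLeft_of_forall_commute [Ring A] [Algebra K A] [Module.Free K A]
    {x : A ⊗[K] D} (hx : ∀ d : D, Commute ((1 : A) ⊗ₜ[K] d) x) :
    x ∈ (includeLeft : A →ₐ[K] A ⊗[K] D).range := by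
  have hmem : x ∈ Subalgebra.centralizer K (includeRight : D →ₐ[K] A ⊗[K] D).range := by
    rw [Subalgebra.mem_centralizer_iff]
    rintro _ ⟨d, rfl⟩
    exact hx d
  rw [Subalgebra.centralizer_range_includeRight_eq_center_tensorProduct] at hmem
  obtain ⟨y, rfl⟩ := hmem
  clear hx
  induction y with
  | zero =>
    rw [map_zero]
    exact zero_mem _
  | add y z hy hz =>
    rw [map_add]
    exact add_mem hy hz
  | tmul a d =>
    obtain ⟨c, hc⟩ := (Algebra.IsCentral.mem_center_iff K).mp d.2
    exact ⟨c • a, by simp [hc, Algebra.algebraMap_eq_smul_one]⟩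

instance isCentral_tensorProduct [CommRing A] [Algebra K A] [Module.Free K A] :
    Algebra.IsCentral A (A ⊗[K] D) where
  out x hx := by
    obtain ⟨a, rfl⟩ := mem_range_includeLeft_of_forall_commute fun d ↦
      Subalgebra.mem_center_iff.mp hx ((1 : A) ⊗ₜ[K] d)
    exact ⟨a, rfl⟩

end Centralizer

section Coordinates

open TensorProduct (equivFinsuppOfBasisLeft)

variable {K A D ι : Type*} [CommRing K] [Ring A] [Algebra K A] [Ring D] [Algebra K D]
  [DecidableEq ι] (b : Module.Basis ι K A)

theorem equivFinsuppOfBasisLeft_one_tmul_mul (d : D) (x : A ⊗[K] D) (i : ι) :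
    equivFinsuppOfBasisLeft b (1 ⊗ₜ d * x) i = d * equivFinsuppOfBasisLeft b x i := by
  induction x with
  | zero => simp
  | add x y hx hy => simp only [mul_add, map_add, Finsupp.add_apply, hx, hy]
  | tmul a e => simp

theorem equivFinsuppOfBasisLeft_mul_one_tmul (d : D) (x : A ⊗[K] D) (i : ι) :
    equivFinsuppOfBasisLeft b (x * 1 ⊗ₜ d) i = equivFinsuppOfBasisLeft b x i * d := by
  induction x with
  | zero => simp
  | add x y hx hy => simp only [add_mul, map_add, Finsupp.add_apply, hx, hy]
  | tmul a e => simp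

theorem card_support_commutator_lt [Nontrivial D] {x : A ⊗[K] D} {i : ι}
    (hi : equivFinsuppOfBasisLeft b x i = 1) (d : D) :
    (equivFinsuppOfBasisLeft b (1 ⊗ₜ d * x - x * 1 ⊗ₜ d)).support.card <
      (equivFinsuppOfBasisLeft b x).support.card := by
  have hcoord (j) : equivFinsuppOfBasisLeft b (1 ⊗ₜ d * x - x * 1 ⊗ₜ d) j =
      d * equivFinsuppOfBasisLeft b x j - equivFinsuppOfBasisLeft b x j * d := by
    rw [map_sub, Finsupp.sub_apply, equivFinsuppOfBasisLeft_one_tmul_mul,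
      equivFinsuppOfBasisLeft_mul_one_tmul]
  refine Finset.card_lt_card ((Finset.ssubset_iff_of_subset fun j ↦ ?_).mpr ⟨i, ?_, ?_⟩)
  · contrapose!
    simp +contextual only [Finsupp.notMem_support_iff, hcoord, mul_zero, zero_mul, sub_zero,
      implies_true]
  · simp [hi]
  · rw [Finsupp.notMem_support_iff, hcoord, hi, mul_one, one_mul, sub_self]

end Coordinates

section Simple

variable {K A D : Type*} [Field K] [Ring A] [Algebra K A] [DivisionRing D] [Algebra K D]
  [Algebra.IsCentral K D]

/- Induction on the number of nonzero coordinates of `x`: once a coordinate of `x` is normalised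
to `1`, it vanishes in every commutator of `x` with some `1 ⊗ d`. -/
theorem exists_ne_zero_tmul_one_mem (I : TwoSidedIdeal (A ⊗[K] D)) {x : A ⊗[K] D} (hx : x ≠ 0)
    (hxI : x ∈ I) : ∃ a : A, a ≠ 0 ∧ a ⊗ₜ[K] 1 ∈ I := by
  classical
  let b := Module.Basis.ofVectorSpace K A
  let c := TensorProduct.equivFinsuppOfBasisLeft (N := D) b
  induction hN : (c x).support.card using Nat.strong_induction_on generalizing x with
  | _ N ih =>
  obtain ⟨i, hi⟩ : ∃ i, c x i ≠ 0 := by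
    by_contra! h
    exact hx (c.map_eq_zero_iff.mp (Finsupp.ext h))
  let y := (1 : A) ⊗ₜ[K] (c x i)⁻¹ * x
  have hyI : y ∈ I := I.mul_mem_left _ _ hxI
  have hcy (j) : c y j = (c x i)⁻¹ * c x j := equivFinsuppOfBasisLeft_one_tmul_mul b _ _ _
  have hyi : c y i = 1 := by rw [hcy, inv_mul_cancel₀ hi]
  by_cases hcomm : ∀ d : D, Commute ((1 : A) ⊗ₜ[K] d) y
  · obtain ⟨a, ha⟩ := mem_range_includeLeft_of_forall_commute hcomm
    have haI : includeLeft a ∈ I := Eq.subst (motive := (· ∈ I)) ha.symm hyI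
    refine ⟨a, ?_, haI⟩
    rintro rfl
    rw [← ha, map_zero, map_zero] at hyi
    exact zero_ne_one hyi
  · push Not at hcomm
    obtain ⟨d, hd⟩ := hcomm
    have hsupp : (c y).support ⊆ (c x).support := fun j ↦ by
      contrapose!
      simp +contextual [hcy]
    exact ih _ (hN ▸ (card_support_commutator_lt b hyi d).trans_le (Finset.card_le_card hsupp))
      (sub_ne_zero.mpr hd) (I.sub_mem (I.mul_mem_left _ _ hyI) (I.mul_mem_right _ _ hyI)) rfl

instance isSimpleRing_tensorProduct [IsSimpleRing A] : IsSimpleRing (A ⊗[K] D) :=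
  .of_eq_bot_or_eq_top fun I ↦ by
    refine or_iff_not_imp_left.mpr fun hI ↦ ?_
    obtain ⟨x, hxI, hx⟩ : ∃ x ∈ I, x ≠ 0 := by
      contrapose! hI
      exact le_bot_iff.mp fun x hx ↦ hI x hx
    obtain ⟨a, ha, haI⟩ := exists_ne_zero_tmul_one_mem I hx hxI
    refine I.one_mem_iff.mp ((TwoSidedIdeal.mem_comap (includeLeft : A →ₐ[K] A ⊗[K] D)).mp ?_)
    exact IsSimpleRing.one_mem_of_ne_zero_mem _ ha ((TwoSidedIdeal.mem_comap _).mpr haI)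

end Simple

end TensorProduct

section Splitting

theorem isCentral_of_matrix (K D m : Type*) [Field K] [Ring D] [Algebra K D] [Fintype m]
    [DecidableEq m] [Nonempty m] [Algebra.IsCentral K (Matrix m m D)] :
    Algebra.IsCentral K D where
  out x hx := by
    have hscalar : Matrix.scalarAlgHom m K x ∈ Subalgebra.center K (Matrix m m D) := by
      rw [Matrix.subalgebraCenter_eq_scalarAlgHom_map]
      exact ⟨x, hx, rfl⟩
    obtain ⟨c, hc⟩ := (Algebra.IsCentral.mem_center_iff K).mp hscalar
    obtain ⟨i⟩ := ‹Nonempty m›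
    refine Algebra.mem_bot.mpr ⟨c, ?_⟩
    simpa [Matrix.algebraMap_matrix_apply] using congr($hc.symm i i)

theorem exists_algEquiv_matrix_of_forall_bijective_algebraMap.{u, v} (K : Type u) (A : Type v)
    [Field K] [Ring A] [Algebra K A] [FiniteDimensional K A] [Algebra.IsCentral K A]
    [IsSimpleRing A]
    (h : ∀ (D : Type v) [DivisionRing D] [Algebra K D] [FiniteDimensional K D]
      [Algebra.IsCentral K D], Function.Bijective (algebraMap K D)) :
    ∃ (n : ℕ) (_ : NeZero n), Nonempty (A ≃ₐ[K] Matrix (Fin n) (Fin n) K) := by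
  have := IsArtinianRing.of_finite K A
  obtain ⟨n, hn, D, _, _, _, ⟨e⟩⟩ := IsSimpleRing.exists_algEquiv_matrix_divisionRing_finite K A
  have : Algebra.IsCentral K (Matrix (Fin n) (Fin n) D) := .of_algEquiv K A _ e
  have := isCentral_of_matrix K D (Fin n)
  exact ⟨n, hn, ⟨e.trans (.mapMatrix (.symm (.ofBijective (Algebra.ofId K D) (h D))))⟩⟩

theorem bijective_algebraMap_of_isSepClosed (E D : Type*) [Field E] [IsSepClosed E]
    [DivisionRing D] [Algebra E D] [FiniteDimensional E D] [Algebra.IsCentral E D] :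
    Function.Bijective (algebraMap E D) := by
  rw [Algebra.bijective_algebraMap_iff]
  by_contra hne
  obtain ⟨x, hx, hsep⟩ := JacobsonNoether.exists_separable_and_not_isCentral' (Ne.symm hne)
  have hdeg := IsSepClosed.degree_eq_one_of_irreducible E
    (minpoly.irreducible (Algebra.IsIntegral.isIntegral x)) hsep
  exact hx (Algebra.mem_bot.mpr (minpoly.mem_range_of_degree_eq_one E x hdeg))

theorem exists_algEquiv_matrix_of_isSepClosed (E A : Type*) [Field E] [IsSepClosed E] [Ring A]
    [Algebra E A] [FiniteDimensional E A] [Algebra.IsCentral E A] [IsSimpleRing A] :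
    ∃ (n : ℕ) (_ : NeZero n), Nonempty (A ≃ₐ[E] Matrix (Fin n) (Fin n) E) :=
  exists_algEquiv_matrix_of_forall_bijective_algebraMap E A fun D ↦
    bijective_algebraMap_of_isSepClosed E D

end Splitting

section ReducedNorm

variable {K E D m : Type*} [Field K] [Field E] [Algebra K E] [Ring D] [Algebra K D] [Fintype m]
  [DecidableEq m]

theorem det_algEquiv (τ : Matrix m m E ≃ₐ[E] Matrix m m E) (M : Matrix m m E) :
    (τ M).det = M.det := by
  let l : Matrix m m E ≃ₐ[E] Module.End E (m → E) := Matrix.toLinAlgEquiv'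
  obtain ⟨T, hT⟩ := LinearEquiv.conjAlgEquiv_surjective E (m → E) (m → E)
    ((l.symm.trans τ).trans l)
  have hconj : l (τ M) = T.conj (l M) := by
    have := congr($hT (l M))
    simp only [AlgEquiv.trans_apply, AlgEquiv.symm_apply_apply] at this
    exact this.symm
  calc (τ M).det = LinearMap.det (l (τ M)) := (LinearMap.det_toLin' _).symm
    _ = LinearMap.det (l M) := by rw [hconj]; exact LinearMap.det_conj (l M) T
    _ = M.det := LinearMap.det_toLin' M

theorem det_one_tmul_mem_range_algebraMap [IsGalois K E] [Nonempty m]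
    (φ : E ⊗[K] D ≃ₐ[E] Matrix m m E) (a : D) :
    (φ (1 ⊗ₜ a)).det ∈ Set.range (algebraMap K E) := by
  rw [← IntermediateField.mem_bot, InfiniteGalois.mem_bot_iff_fixed]
  intro σ
  let ψ : E ⊗[K] D →ₐ[E] Matrix m m E :=
    Algebra.TensorProduct.lift (Algebra.ofId E _)
      (σ.toAlgHom.mapMatrix.comp
        ((φ.restrictScalars K).toAlgHom.comp Algebra.TensorProduct.includeRight))
      fun _ _ ↦ Algebra.commutes _ _
  -- Conjugating `φ` by `σ` changes it by an automorphism of the matrix algebra.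
  let τ := AlgEquiv.ofBijective (ψ.comp φ.symm.toAlgHom) (AlgHom.bijective _)
  have hτ : τ (φ (1 ⊗ₜ a)) = σ.toAlgHom.mapMatrix (φ (1 ⊗ₜ a)) := by simp [τ, ψ]
  calc σ (φ (1 ⊗ₜ a)).det = (τ (φ (1 ⊗ₜ a))).det := hτ ▸ AlgHom.map_det σ.toAlgHom _
    _ = (φ (1 ⊗ₜ a)).det := det_algEquiv τ _

theorem exists_isHomogeneous_algebraMap_eval_eq_det [IsGalois K E] [Nonempty m] {ι : Type*}
    [Fintype ι] (φ : E ⊗[K] D ≃ₐ[E] Matrix m m E) (v : ι → D) :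
    ∃ g : MvPolynomial ι K, g.IsHomogeneous (Fintype.card m) ∧
      ∀ y : ι → K, algebraMap K E (g.eval y) = (φ (1 ⊗ₜ ∑ i, y i • v i)).det := by
  obtain ⟨f, hf, hfy⟩ := exists_isHomogeneous_eval_eq_det fun i ↦ φ (1 ⊗ₜ v i)
  obtain ⟨π, hπ⟩ := LinearMap.exists_leftInverse_of_injective (Algebra.linearMap K E)
    (LinearMap.ker_eq_bot.mpr (algebraMap K E).injective)
  obtain ⟨g, hg, hgy⟩ := exists_isHomogeneous_eval_eq_map π hf
  refine ⟨g, hg, fun y ↦ ?_⟩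
  obtain ⟨c, hc⟩ := det_one_tmul_mem_range_algebraMap φ (∑ i, y i • v i)
  have hsum : φ (1 ⊗ₜ ∑ i, y i • v i) = ∑ i, algebraMap K E (y i) • φ (1 ⊗ₜ v i) := by
    simp only [TensorProduct.tmul_sum, map_sum, TensorProduct.tmul_smul, algebraMap_smul,
      ← AlgEquiv.restrictScalars_apply K φ, map_smul]
  rw [hgy, hfy, ← hsum, ← hc]
  exact congrArg _ (LinearMap.congr_fun hπ c)

end ReducedNorm

namespace IsQuasiAlgClosed

theorem bijective_algebraMap (K D : Type*) [Field K] [IsQuasiAlgClosed K] [DivisionRing D]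
    [Algebra K D] [FiniteDimensional K D] [Algebra.IsCentral K D] :
    Function.Bijective (algebraMap K D) := by
  let E := SeparableClosure K
  obtain ⟨n, _, ⟨φ⟩⟩ := exists_algEquiv_matrix_of_isSepClosed E (E ⊗[K] D)
  have hdim : Module.finrank K D = n * n := by
    rw [← Module.finrank_baseChange (R := E), φ.toLinearEquiv.finrank_eq, Module.finrank_matrix]
    simp
  let b := Module.finBasis K D
  obtain ⟨g, hg, hgy⟩ := exists_isHomogeneous_algebraMap_eval_eq_det φ b
  have hanisotropic (y) (hy : g.eval y = 0) : y = 0 := by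
    have hdet := (hgy y).symm
    rw [hy, map_zero] at hdet
    have hsum : ∑ i, y i • b i = 0 := by
      by_contra hne
      have hunit : IsUnit (φ (1 ⊗ₜ ∑ i, y i • b i)) :=
        ((isUnit_iff_ne_zero.mpr hne).map
          (Algebra.TensorProduct.includeRight : D →ₐ[K] E ⊗[K] D)).map φ
      rw [Matrix.isUnit_iff_isUnit_det, hdet] at hunit
      exact not_isUnit_zero hunit
    exact funext (Fintype.linearIndependent_iff.mp b.linearIndependent y hsum)
  have hn : n * n ≤ n := by
    by_contra! hlt
    obtain ⟨y, hy, hgy₀⟩ := exists_ne_zero_eval_eq_zero hg (by simpa using NeZero.ne n)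
      (by simpa [hdim] using hlt)
    exact hy (hanisotropic y hgy₀)
  have hn₁ : n = 1 := by nlinarith [NeZero.pos n]
  rw [Algebra.bijective_algebraMap_iff, eq_comm, Subalgebra.bot_eq_top_iff_finrank_eq_one, hdim,
    hn₁]

theorem nonempty_algEquiv_matrix (K A : Type*) [Field K] [IsQuasiAlgClosed K] [Ring A]
    [Algebra K A] [FiniteDimensional K A] [Algebra.IsCentral K A] [IsSimpleRing A] {d : ℕ}
    (hd : Module.finrank K A = d ^ 2) : Nonempty (A ≃ₐ[K] Matrix (Fin d) (Fin d) K) := by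
  obtain ⟨n, _, ⟨e⟩⟩ := exists_algEquiv_matrix_of_forall_bijective_algebraMap K A fun D ↦
    bijective_algebraMap K D
  have hsq : n ^ 2 = d ^ 2 := by
    rw [← hd, e.toLinearEquiv.finrank_eq, Module.finrank_matrix]
    simp [sq]
  obtain rfl := Nat.pow_left_injective two_ne_zero hsq
  exact ⟨e⟩

end IsQuasiAlgClosed

theorem stmt0_general (L : Type*) [Field L] [IsAlgClosed L]
    (K : Type*) [Field K] [Algebra L K] (htr : Algebra.trdeg L K ≤ 1)
    (D : Type*) [Ring D] [Algebra K D]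
    [FiniteDimensional K D] [Algebra.IsCentral K D] [IsSimpleRing D]
    (d : ℕ) (hd : Module.finrank K D = d ^ 2) :
    Nonempty (D ≃ₐ[K] Matrix (Fin d) (Fin d) K) :=
  have := IsQuasiAlgClosed.of_trdeg_le_one L K htr
  IsQuasiAlgClosed.nonempty_algEquiv_matrix K D hd

/-- **Splitting of central simple algebras over function fields of curves over an
algebraically closed field.**  If `L` is algebraically closed and `K/L` is a finitely
generated field extension of transcendence degree `1` (the function field of a curve
over `L`), then every central simple `K`-algebra `D` of dimension `d ^ 2` over `K`
is isomorphic, as a `K`-algebra, to the algebra of `d × d` matrices over `K`. -/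
theorem stmt0 (L : Type*) [Field L] [IsAlgClosed L]
    (K : Type*) [Field K] [Algebra L K]
    (hfg : ∃ s : Finset K, IntermediateField.adjoin L (s : Set K) = ⊤)
    (htr : ∃ x : K, IsTranscendenceBasis L (fun _ : Unit => x))
    (D : Type*) [Ring D] [Algebra K D]
    [FiniteDimensional K D] [Algebra.IsCentral K D] [IsSimpleRing D]
    (d : ℕ) (hd : Module.finrank K D = d ^ 2) :
    Nonempty (D ≃ₐ[K] Matrix (Fin d) (Fin d) K) := by
  obtain ⟨x, hx⟩ := htr
  exact stmt0_general L K (by simpa using hx.lift_cardinalMk_eq_trdeg.ge) D d hd
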